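/- arXiv:2002.09795 — 2 statements merged into one kernel-verified Lean document; each statement's English description precedes it below -/
import Mathlib

section
/- Let Q_0, Q_1, …, Q_T : Ω → (S×A → ℝ) be random functions and ε ≥ 0 be such that 𝔼[‖Q_k − 𝒯Q_{k−1}‖₂²] ≤ ε for every k ∈ {1,…,T}. Then 𝔼[‖Q_T − Q*‖_∞] ≤ √ε/(1−γ) + γ^T · 𝔼[‖Q_0 − Q*‖_∞]. -/
open MeasureTheory ProbabilityTheory Finset

/-- sup norm of a real function on a finite nonempty type. -/
noncomputable def supNorm {ι : Type*} [Fintype ι] [Nonempty ι] (f : ι → ℝ) : ℝ :=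
  Finset.univ.sup' Finset.univ_nonempty (fun i => |f i|)

/-- squared Euclidean norm of a real function on a finite type. -/
def sqNorm {ι : Type*} [Fintype ι] (f : ι → ℝ) : ℝ := ∑ i, (f i) ^ 2

/-- Bellman optimality operator. -/
noncomputable def bellman {S A : Type*} [Fintype S] [Fintype A] [Nonempty A]
    (P : S → A → S → ℝ) (r : S → A → ℝ) (γ : ℝ) (Q : S × A → ℝ) : S × A → ℝ :=
  fun x => r x.1 x.2 + γ * ∑ s' : S, P x.1 x.2 s' *
    Finset.univ.sup' Finset.univ_nonempty (fun a' => Q (s', a'))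

/-!
Let `X k = ‖Q k - Q*‖_∞`. Since `Q*` is fixed by the `γ`-contraction `𝒯` and the sup norm is at most
the Euclidean norm, `X (k + 1) ≤ γ X k + ‖Q (k + 1) - 𝒯 (Q k)‖₂` pointwise. Jensen's inequality for
the square root bounds the mean of the last term by `√ε`, so the means of `X k` satisfy the affine
recursion `u (k + 1) ≤ γ u k + √ε`; subtracting its fixed point `√ε / (1 - γ)` makes it geometric.
-/

open scoped NNReal

section Norms

variable {ι : Type*} [Fintype ι]

lemma supNorm_eq_norm [Nonempty ι] (f : ι → ℝ) : supNorm f = ‖f‖ := by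
  refine le_antisymm (sup'_le _ _ fun i _ => norm_le_pi_norm f i) ?_
  exact (pi_norm_le_iff_of_nonempty f).2 fun i => le_sup' (fun i => |f i|) (mem_univ i)

lemma sqNorm_nonneg (f : ι → ℝ) : 0 ≤ sqNorm f :=
  sum_nonneg fun _ _ => sq_nonneg _

lemma norm_le_sqrt_sqNorm (f : ι → ℝ) : ‖f‖ ≤ √(sqNorm f) := by
  refine (pi_norm_le_iff_of_nonneg (Real.sqrt_nonneg _)).2 fun i => Real.abs_le_sqrt ?_
  exact single_le_sum (f := fun i => f i ^ 2) (fun _ _ => sq_nonneg _) (mem_univ i)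

lemma supNorm_sub_fixedPt_le [Nonempty ι] {F : (ι → ℝ) → ι → ℝ} {γ : ℝ≥0}
    (hF : LipschitzWith γ F) {q : ι → ℝ} (hq : Function.IsFixedPt F q) (f g : ι → ℝ) :
    supNorm (g - q) ≤ γ * supNorm (f - q) + √(sqNorm (g - F f)) := by
  simp only [supNorm_eq_norm]
  calc ‖g - q‖
    _ ≤ ‖g - F f‖ + ‖F f - F q‖ := by
        simpa only [hq.eq] using norm_sub_le_norm_sub_add_norm_sub g (F f) q
    _ ≤ √(sqNorm (g - F f)) + γ * ‖f - q‖ :=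
        add_le_add (norm_le_sqrt_sqNorm _) (hF.norm_sub_le f q)
    _ = γ * ‖f - q‖ + √(sqNorm (g - F f)) := add_comm _ _

end Norms

section BellmanOperator

lemma abs_sup'_sub_sup'_le {ι G : Type*} [AddCommGroup G] [LinearOrder G] [IsOrderedAddMonoid G]
    {s : Finset ι} (hs : s.Nonempty) {f g : ι → G} {c : G} (h : ∀ i ∈ s, |f i - g i| ≤ c) :
    |s.sup' hs f - s.sup' hs g| ≤ c := by
  refine abs_sub_le_iff.2 ⟨sub_le_iff_le_add.2 ?_, sub_le_iff_le_add.2 ?_⟩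
  · refine sup'_le _ _ fun i hi => ?_
    exact (sub_le_iff_le_add.1 (abs_sub_le_iff.1 (h i hi)).1).trans
      (add_le_add_right (le_sup' g hi) c)
  · refine sup'_le _ _ fun i hi => ?_
    exact (sub_le_iff_le_add.1 (abs_sub_le_iff.1 (h i hi)).2).trans
      (add_le_add_right (le_sup' f hi) c)

lemma abs_sum_mul_le_of_sum_le_one {ι R : Type*} [Ring R] [LinearOrder R] [IsOrderedRing R]
    {s : Finset ι} {w f : ι → R} {c : R} (hw0 : ∀ i ∈ s, 0 ≤ w i) (hw1 : ∑ i ∈ s, w i ≤ 1)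
    (hc : 0 ≤ c) (hf : ∀ i ∈ s, |f i| ≤ c) : |∑ i ∈ s, w i * f i| ≤ c :=
  calc |∑ i ∈ s, w i * f i|
    _ ≤ ∑ i ∈ s, |w i * f i| := abs_sum_le_sum_abs _ _
    _ ≤ ∑ i ∈ s, w i * c := sum_le_sum fun i hi => by
        rw [abs_mul, abs_of_nonneg (hw0 i hi)]
        exact mul_le_mul_of_nonneg_left (hf i hi) (hw0 i hi)
    _ = (∑ i ∈ s, w i) * c := (sum_mul _ _ _).symm
    _ ≤ c := mul_le_of_le_one_left hc hw1

variable {S A : Type*} [Fintype S] [Fintype A] [Nonempty A]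

lemma lipschitzWith_bellman {P : S → A → S → ℝ} (hP0 : ∀ s a s', 0 ≤ P s a s')
    (hP1 : ∀ s a, ∑ s', P s a s' ≤ 1) (r : S → A → ℝ) (γ : ℝ≥0) :
    LipschitzWith γ (bellman P r γ) := by
  refine LipschitzWith.of_dist_le_mul fun Q R => (dist_pi_le_iff (by positivity)).2 fun x => ?_
  let value (Q : S × A → ℝ) (s : S) : ℝ := univ.sup' univ_nonempty fun a => Q (s, a)
  have abs_value_sub_le (s : S) : |value Q s - value R s| ≤ dist Q R :=
    abs_sup'_sub_sup'_le univ_nonempty fun a _ => dist_le_pi_dist Q R (s, a)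
  have bellman_sub : bellman P r γ Q x - bellman P r γ R x =
      γ * ∑ s, P x.1 x.2 s * (value Q s - value R s) := by
    simp only [bellman, value, mul_sub, sum_sub_distrib]
    ring
  rw [Real.dist_eq, bellman_sub, abs_mul, NNReal.abs_eq]
  gcongr
  exact abs_sum_mul_le_of_sum_le_one (fun s _ => hP0 _ _ s) (hP1 _ _) dist_nonneg
    fun s _ => abs_value_sub_le s

end BellmanOperator

lemma le_div_one_sub_add_pow_mul {u : ℕ → ℝ} {γ δ : ℝ} (hγ0 : 0 ≤ γ) (hγ1 : γ < 1) (hδ : 0 ≤ δ)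
    {n : ℕ} (hu : ∀ k < n, u (k + 1) ≤ γ * u k + δ) : u n ≤ δ / (1 - γ) + γ ^ n * u 0 := by
  have one_sub_pos : 0 < 1 - γ := sub_pos.2 hγ1
  set b := δ / (1 - γ) with hb
  have b_fixed : γ * b + δ = b := by
    rw [hb]
    field_simp
    ring
  have geometric : u n - b ≤ γ ^ n * (u 0 - b) :=
    le_geom (u := fun k => u k - b) hγ0 n fun k hk => by linarith [hu k hk]
  have : 0 ≤ γ ^ n * b := by positivity
  linarith

section Expectation

variable {Ω : Type*} [MeasurableSpace Ω] {μ : Measure Ω}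

lemma integrable_sqrt [IsFiniteMeasure μ] {X : Ω → ℝ} (hX0 : 0 ≤ᵐ[μ] X) (hX : Integrable X μ) :
    Integrable (fun ω => √(X ω)) μ := by
  have sqrt_meas := Real.continuous_sqrt.comp_aestronglyMeasurable hX.aestronglyMeasurable
  refine ((memLp_two_iff_integrable_sq sqrt_meas).2 (hX.congr ?_)).integrable one_le_two
  filter_upwards [hX0] with ω hω using (Real.sq_sqrt hω).symm

lemma integral_sqrt_le_sqrt_integral [IsProbabilityMeasure μ] {X : Ω → ℝ} (hX0 : 0 ≤ᵐ[μ] X)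
    (hX : Integrable X μ) : ∫ ω, √(X ω) ∂μ ≤ √(∫ ω, X ω ∂μ) :=
  Real.strictConcaveOn_sqrt.concaveOn.le_map_integral Real.continuous_sqrt.continuousOn isClosed_Ici
    hX0 hX (integrable_sqrt hX0 hX)

variable {X D : ℕ → Ω → ℝ} {γ : ℝ} {n : ℕ}

lemma integrable_of_le_mul_add (hXmeas : ∀ k ≤ n, AEStronglyMeasurable (X k) μ)
    (hX0 : ∀ k ≤ n, 0 ≤ᵐ[μ] X k) (hXint : Integrable (X 0) μ)
    (hDint : ∀ k < n, Integrable (D k) μ)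
    (hstep : ∀ k < n, ∀ᵐ ω ∂μ, X (k + 1) ω ≤ γ * X k ω + D k ω) :
    ∀ k ≤ n, Integrable (X k) μ := by
  intro k
  induction k with
  | zero => exact fun _ => hXint
  | succ k ih =>
    intro hk
    refine (((ih (by lia)).const_mul γ).add (hDint k hk)).mono' (hXmeas _ hk) ?_
    filter_upwards [hX0 _ hk, hstep k hk] with ω hω hle
    rwa [Real.norm_of_nonneg hω]

lemma integral_le_div_one_sub_add_pow_mul {δ : ℝ} (hγ0 : 0 ≤ γ) (hγ1 : γ < 1) (hδ : 0 ≤ δ)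
    (hXint : ∀ k ≤ n, Integrable (X k) μ) (hDint : ∀ k < n, Integrable (D k) μ)
    (hD : ∀ k < n, ∫ ω, D k ω ∂μ ≤ δ)
    (hstep : ∀ k < n, ∀ᵐ ω ∂μ, X (k + 1) ω ≤ γ * X k ω + D k ω) :
    ∫ ω, X n ω ∂μ ≤ δ / (1 - γ) + γ ^ n * ∫ ω, X 0 ω ∂μ := by
  refine le_div_one_sub_add_pow_mul (u := fun k => ∫ ω, X k ω ∂μ) hγ0 hγ1 hδ fun k hk => ?_
  have hγX := (hXint k hk.le).const_mul γ
  calc ∫ ω, X (k + 1) ω ∂μ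
    _ ≤ ∫ ω, γ * X k ω + D k ω ∂μ :=
        integral_mono_ae (hXint _ hk) (hγX.add (hDint k hk)) (hstep k hk)
    _ = γ * ∫ ω, X k ω ∂μ + ∫ ω, D k ω ∂μ := by
        rw [integral_add hγX (hDint k hk), integral_const_mul]
    _ ≤ γ * ∫ ω, X k ω ∂μ + δ := by grw [hD k hk]

end Expectation

theorem outer_iteration_convergence_uniform_error_general
    {ι : Type*} [Fintype ι] [Nonempty ι]
    {Ω : Type*} [MeasurableSpace Ω] {μ : Measure Ω} [IsProbabilityMeasure μ]
    {F : (ι → ℝ) → ι → ℝ} {γ : ℝ≥0} (hF : ContractingWith γ F)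
    {Qstar : ι → ℝ} (hQstar : Function.IsFixedPt F Qstar)
    {T : ℕ} {Q : ℕ → Ω → ι → ℝ} (hQmeas : ∀ k ≤ T, AEMeasurable (Q k) μ) {ε : ℝ}
    (hmomInt : ∀ k < T, Integrable (fun ω => sqNorm (Q (k + 1) ω - F (Q k ω))) μ)
    (hmom : ∀ k < T, ∫ ω, sqNorm (Q (k + 1) ω - F (Q k ω)) ∂μ ≤ ε)
    (hint : Integrable (fun ω => supNorm (Q 0 ω - Qstar)) μ) :
    ∫ ω, supNorm (Q T ω - Qstar) ∂μ ≤
      √ε / (1 - γ) + γ ^ T * ∫ ω, supNorm (Q 0 ω - Qstar) ∂μ := by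
  have error_meas (k : ℕ) (hk : k ≤ T) :
      AEStronglyMeasurable (fun ω => supNorm (Q k ω - Qstar)) μ := by
    simpa only [supNorm_eq_norm] using ((hQmeas k hk).sub_const Qstar).norm.aestronglyMeasurable
  have error_nonneg (k : ℕ) : 0 ≤ᵐ[μ] fun ω => supNorm (Q k ω - Qstar) :=
    .of_forall fun ω => (norm_nonneg _).trans_eq (supNorm_eq_norm _).symm
  have residual_nonneg (k : ℕ) : 0 ≤ᵐ[μ] fun ω => sqNorm (Q (k + 1) ω - F (Q k ω)) :=
    .of_forall fun ω => sqNorm_nonneg _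
  have residual_integrable (k : ℕ) (hk : k < T) :=
    integrable_sqrt (residual_nonneg k) (hmomInt k hk)
  have integral_residual_le (k : ℕ) (hk : k < T) :
      ∫ ω, √(sqNorm (Q (k + 1) ω - F (Q k ω))) ∂μ ≤ √ε :=
    (integral_sqrt_le_sqrt_integral (residual_nonneg k) (hmomInt k hk)).trans
      (Real.sqrt_le_sqrt (hmom k hk))
  have error_step (k : ℕ) (_ : k < T) : ∀ᵐ ω ∂μ, supNorm (Q (k + 1) ω - Qstar) ≤
      γ * supNorm (Q k ω - Qstar) + √(sqNorm (Q (k + 1) ω - F (Q k ω))) :=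
    .of_forall fun ω => supNorm_sub_fixedPt_le hF.toLipschitzWith hQstar (Q k ω) (Q (k + 1) ω)
  have error_integrable := integrable_of_le_mul_add error_meas (fun k _ => error_nonneg k) hint
    residual_integrable error_step
  exact integral_le_div_one_sub_add_pow_mul γ.coe_nonneg (by exact_mod_cast hF.1)
    (Real.sqrt_nonneg ε) error_integrable residual_integrable integral_residual_le error_step

theorem outer_iteration_convergence_uniform_error
    {S A : Type*} [Fintype S] [Fintype A] [Nonempty S] [Nonempty A]
    {Ω : Type*} [MeasurableSpace Ω] (μ : Measure Ω) [IsProbabilityMeasure μ]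
    (P : S → A → S → ℝ) (hP0 : ∀ s a s', 0 ≤ P s a s') (hP1 : ∀ s a, ∑ s', P s a s' = 1)
    (r : S → A → ℝ) (hr : ∀ s a, |r s a| ≤ 1)
    (γ : ℝ) (hγ : γ ∈ Set.Ioo (0 : ℝ) 1)
    (Qstar : S × A → ℝ) (hQstar : bellman P r γ Qstar = Qstar)
    (T : ℕ) (Q : ℕ → Ω → S × A → ℝ) (hQmeas : ∀ k, Measurable (Q k))
    (ε : ℝ) (hε0 : 0 ≤ ε)
    (hmomInt : ∀ k ∈ Finset.Icc 1 T,
      Integrable (fun ω => sqNorm (fun x => Q k ω x - bellman P r γ (Q (k - 1) ω) x)) μ)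
    (hmom : ∀ k ∈ Finset.Icc 1 T,
      ∫ ω, sqNorm (fun x => Q k ω x - bellman P r γ (Q (k - 1) ω) x) ∂μ ≤ ε)
    (hint : ∀ k, Integrable (fun ω => supNorm (fun x => Q k ω x - Qstar x)) μ) :
    ∫ ω, supNorm (fun x => Q T ω x - Qstar x) ∂μ ≤
      Real.sqrt ε / (1 - γ)
        + γ ^ T * ∫ ω, supNorm (fun x => Q 0 ω x - Qstar x) ∂μ := by
  lift γ to ℝ≥0 using hγ.1.le
  have bellman_contracting : ContractingWith γ (bellman P r γ) :=
    ⟨by exact_mod_cast hγ.2, lipschitzWith_bellman hP0 (fun s a => (hP1 s a).le) r γ⟩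
  have succ_mem (k : ℕ) (hk : k < T) : k + 1 ∈ Finset.Icc 1 T := mem_Icc.2 ⟨k.succ_pos, hk⟩
  exact outer_iteration_convergence_uniform_error_general bellman_contracting hQstar
    (fun k _ => (hQmeas k).aemeasurable) (fun k hk => hmomInt (k + 1) (succ_mem k hk))
    (fun k hk => hmom (k + 1) (succ_mem k hk)) (hint 0)
end

section
/- Let Q, Q_k : S×A → ℝ and let β be a step size with 0 < β ≤ c/(8L). Then the expected one-step SGD progress satisfies Σ_{(s,a,s')} d(s,a)·P s a s' · ‖𝒯Q_k − (Q − β·g(Q; Q_k, (s,a,s')))‖_D² ≤ (1 − cβ)·‖𝒯Q_k − Q‖_D² + 12·|S|·|A|·γ²·L·β²·‖Q* − Q_k‖_∞² + 18·|S|·|A|·L·β²/(1−γ)². -/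
open MeasureTheory ProbabilityTheory Finset

/-- Stochastic gradient for sample `(s,a,s')`: zero except at coordinate `(s,a)`,
where it takes the value `Q(s,a) - r(s,a) - γ·max_{a'} Qk(s',a')`. -/
noncomputable def sgrad {S A : Type*} [Fintype A] [Nonempty A] [DecidableEq S] [DecidableEq A]
    (r : S → A → ℝ) (γ : ℝ) (Q Qk : S × A → ℝ) (smp : S × A × S) : S × A → ℝ :=
  fun x => if x = (smp.1, smp.2.1) then
      Q (smp.1, smp.2.1) - r smp.1 smp.2.1
        - γ * Finset.univ.sup' Finset.univ_nonempty (fun a' => Qk (smp.2.2, a'))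
    else 0

/-- squared `D`-weighted norm. -/
def DnormSq {S A : Type*} [Fintype S] [Fintype A] (d : S × A → ℝ) (f : S × A → ℝ) : ℝ :=
  ∑ x, d x * (f x) ^ 2

/-! The gradient at a sampled pair `x = (s, a)` has conditional mean `Q x - 𝒯Qk x`, so with
`e = 𝒯Qk - Q` the step replaces `e x` by a random variable of mean `(1 - β) e x` and variance
`β² γ²` times that of the next-state value `max_{a'} Qk (s', a')`. The bias term contracts the
weighted error at rate `β (2 - β) d x ≥ c β (2 - β)`, and the variance is at most `‖Qk‖_∞²`, where
`‖Qk‖_∞ ≤ ‖Q* - Qk‖_∞ + ‖Q*‖_∞` and `‖Q*‖_∞ ≤ 1 / (1 - γ)`. -/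

section WeightedVariance

variable {ι : Type*} [Fintype ι] {p X : ι → ℝ} {M : ℝ}

/-- The variance of `X` under the weights `p`; it is the probabilistic variance when `p` is a
probability mass function. -/
def weightedVariance (p X : ι → ℝ) : ℝ :=
  ∑ i, p i * (X i - ∑ j, p j * X j) ^ 2

lemma abs_sum_mul_le_of_sum_eq_one (hp0 : ∀ i, 0 ≤ p i) (hp1 : ∑ i, p i = 1)
    (hX : ∀ i, |X i| ≤ M) : |∑ i, p i * X i| ≤ M :=
  abs_le.2 <| (convex_Icc (-M) M).sum_mem (fun i _ => hp0 i) hp1 fun i _ => abs_le.1 (hX i)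

lemma sum_mul_add_mul_sub_mean_sq (hp1 : ∑ i, p i = 1) (X : ι → ℝ) (a b : ℝ) :
    ∑ i, p i * (a + b * (X i - ∑ j, p j * X j)) ^ 2 = a ^ 2 + b ^ 2 * weightedVariance p X := by
  set m := ∑ j, p j * X j with hm
  have centered : ∑ i, p i * (X i - m) = 0 := by
    simp only [mul_sub, sum_sub_distrib, ← sum_mul, hp1, one_mul, ← hm, sub_self]
  calc ∑ i, p i * (a + b * (X i - m)) ^ 2
      = ∑ i, (a ^ 2 * p i + 2 * a * b * (p i * (X i - m)) + b ^ 2 * (p i * (X i - m) ^ 2)) :=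
        sum_congr rfl fun i _ => by ring
    _ = a ^ 2 * ∑ i, p i + 2 * a * b * ∑ i, p i * (X i - m) + b ^ 2 * weightedVariance p X := by
        simp only [sum_add_distrib, ← mul_sum, weightedVariance, ← hm]
    _ = a ^ 2 + b ^ 2 * weightedVariance p X := by rw [hp1, centered]; ring

lemma weightedVariance_nonneg (hp0 : ∀ i, 0 ≤ p i) (X : ι → ℝ) : 0 ≤ weightedVariance p X :=
  sum_nonneg fun i _ => mul_nonneg (hp0 i) (sq_nonneg _)

lemma weightedVariance_le_sq (hp0 : ∀ i, 0 ≤ p i) (hp1 : ∑ i, p i = 1)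
    (hX : ∀ i, |X i| ≤ M) : weightedVariance p X ≤ M ^ 2 := by
  set m := ∑ j, p j * X j with hm
  have second_moment : ∑ i, p i * X i ^ 2 = m ^ 2 + weightedVariance p X := by
    simpa only [← hm, one_mul, add_sub_cancel, one_pow] using
      sum_mul_add_mul_sub_mean_sq hp1 X m 1
  have second_moment_le : ∑ i, p i * X i ^ 2 ≤ M ^ 2 :=
    (convex_Iic (M ^ 2)).sum_mem (fun i _ => hp0 i) hp1 fun i _ =>
      sq_le_sq' (abs_le.1 (hX i)).1 (abs_le.1 (hX i)).2
  linarith [sq_nonneg m]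

end WeightedVariance

section SupNorm

variable {ι : Type*} [Fintype ι] [Nonempty ι]

lemma abs_le_supNorm (f : ι → ℝ) (i : ι) : |f i| ≤ supNorm f :=
  le_sup' (fun i => |f i|) (mem_univ i)

lemma supNorm_le {f : ι → ℝ} {B : ℝ} (hf : ∀ i, |f i| ≤ B) : supNorm f ≤ B :=
  sup'_le _ _ fun i _ => hf i

lemma supNorm_nonneg (f : ι → ℝ) : 0 ≤ supNorm f :=
  (abs_nonneg _).trans (abs_le_supNorm f (Classical.arbitrary ι))

lemma supNorm_le_supNorm_sub_add (f g : ι → ℝ) :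
    supNorm f ≤ supNorm (fun i => g i - f i) + supNorm g :=
  supNorm_le fun i => calc
    |f i| ≤ |g i - f i| + |g i| := by
      simpa only [sub_add_cancel, abs_sub_comm] using abs_add_le (f i - g i) (g i)
    _ ≤ supNorm (fun i => g i - f i) + supNorm g :=
      add_le_add (abs_le_supNorm (fun i => g i - f i) i) (abs_le_supNorm g i)

end SupNorm

section BellmanOperator

variable {S A : Type*} [Fintype A] [Nonempty A]

/-- The state value `max_{a} Q (s, a)` of acting greedily with respect to `Q`; it is the random
quantity both in the Bellman operator and in the stochastic gradient. -/
noncomputable def greedyValue (Q : S × A → ℝ) (s : S) : ℝ :=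
  univ.sup' univ_nonempty fun a => Q (s, a)

variable [Fintype S] {P : S → A → S → ℝ} {r : S → A → ℝ} {γ R : ℝ} {Q : S × A → ℝ}

lemma bellman_apply (P : S → A → S → ℝ) (r : S → A → ℝ) (γ : ℝ) (Q : S × A → ℝ) (s : S) (a : A) :
    bellman P r γ Q (s, a) = r s a + γ * ∑ s', P s a s' * greedyValue Q s' :=
  rfl

variable [Nonempty S]

lemma abs_greedyValue_le_supNorm (Q : S × A → ℝ) (s : S) : |greedyValue Q s| ≤ supNorm Q := by
  obtain ⟨a, -, ha⟩ := exists_mem_eq_sup' (univ_nonempty (α := A)) fun a => Q (s, a)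
  rw [greedyValue, ha]
  exact abs_le_supNorm Q (s, a)

lemma supNorm_bellman_le (hP0 : ∀ s a s', 0 ≤ P s a s') (hP1 : ∀ s a, ∑ s', P s a s' = 1)
    (hr : ∀ s a, |r s a| ≤ R) (hγ0 : 0 ≤ γ) (Q : S × A → ℝ) :
    supNorm (bellman P r γ Q) ≤ R + γ * supNorm Q := by
  refine supNorm_le fun ⟨s, a⟩ => ?_
  have mean_le : |∑ s', P s a s' * greedyValue Q s'| ≤ supNorm Q :=
    abs_sum_mul_le_of_sum_eq_one (hP0 s a) (hP1 s a) (abs_greedyValue_le_supNorm Q)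
  calc |bellman P r γ Q (s, a)|
      ≤ |r s a| + |γ * ∑ s', P s a s' * greedyValue Q s'| := abs_add_le _ _
    _ = |r s a| + γ * |∑ s', P s a s' * greedyValue Q s'| := by rw [abs_mul, abs_of_nonneg hγ0]
    _ ≤ R + γ * supNorm Q := add_le_add (hr s a) (mul_le_mul_of_nonneg_left mean_le hγ0)

lemma supNorm_le_div_of_bellman_eq_self (hP0 : ∀ s a s', 0 ≤ P s a s')
    (hP1 : ∀ s a, ∑ s', P s a s' = 1) (hr : ∀ s a, |r s a| ≤ R) (hγ0 : 0 ≤ γ) (hγ1 : γ < 1)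
    (hQ : bellman P r γ Q = Q) : supNorm Q ≤ R / (1 - γ) := by
  have self_bound : supNorm Q ≤ R + γ * supNorm Q := by
    simpa only [hQ] using supNorm_bellman_le hP0 hP1 hr hγ0 Q
  rw [le_div_iff₀ (sub_pos.2 hγ1)]
  linarith

end BellmanOperator

section WeightedNorm

variable {S A : Type*} [Fintype S] [Fintype A] {d : S × A → ℝ} {c : ℝ}

lemma DnormSq_nonneg (hd0 : ∀ x, 0 ≤ d x) (f : S × A → ℝ) : 0 ≤ DnormSq d f :=
  sum_nonneg fun x _ => mul_nonneg (hd0 x) (sq_nonneg _)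

lemma DnormSq_eq_add_of_eqOn_compl (d : S × A → ℝ) {f g : S × A → ℝ} {x₀ : S × A}
    (hfg : ∀ x, x ≠ x₀ → f x = g x) :
    DnormSq d f = DnormSq d g + d x₀ * (f x₀ ^ 2 - g x₀ ^ 2) := by
  rw [← sub_eq_iff_eq_add', DnormSq, DnormSq, ← sum_sub_distrib,
    Fintype.sum_eq_single x₀ fun x hx => by rw [hfg x hx, sub_self], mul_sub]

lemma mul_DnormSq_le_sum_sq_mul_sq (hd0 : ∀ x, 0 ≤ d x) (hcd : ∀ x, c ≤ d x) (f : S × A → ℝ) :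
    c * DnormSq d f ≤ ∑ x, d x ^ 2 * f x ^ 2 := by
  rw [DnormSq, mul_sum]
  refine sum_le_sum fun x _ => ?_
  rw [sq (d x), mul_assoc]
  exact mul_le_mul_of_nonneg_right (hcd x) (mul_nonneg (hd0 x) (sq_nonneg _))

end WeightedNorm

section ExpectedStep

variable {S A : Type*} [Fintype S] [Fintype A] [Nonempty A]
  {P : S → A → S → ℝ} {d : S × A → ℝ} {c L β γ R : ℝ}

lemma sum_sq_mul_weightedVariance_le [Nonempty S] (hP0 : ∀ s a s', 0 ≤ P s a s')
    (hP1 : ∀ s a, ∑ s', P s a s' = 1) (hd0 : ∀ x, 0 ≤ d x) (hd1 : ∑ x, d x = 1)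
    (hdL : ∀ x, d x ≤ L) (Q : S × A → ℝ) :
    ∑ x, d x ^ 2 * weightedVariance (P x.1 x.2) (greedyValue Q) ≤ L * supNorm Q ^ 2 := by
  calc ∑ x, d x ^ 2 * weightedVariance (P x.1 x.2) (greedyValue Q)
      ≤ ∑ x, d x * (L * supNorm Q ^ 2) := sum_le_sum fun x _ => by
        have variance_le : weightedVariance (P x.1 x.2) (greedyValue Q) ≤ supNorm Q ^ 2 :=
          weightedVariance_le_sq (hP0 _ _) (hP1 _ _) (abs_greedyValue_le_supNorm Q)
        rw [sq (d x), mul_assoc]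
        exact mul_le_mul_of_nonneg_left (mul_le_mul (hdL x) variance_le
          (weightedVariance_nonneg (hP0 _ _) _) ((hd0 x).trans (hdL x))) (hd0 x)
    _ = L * supNorm Q ^ 2 := by rw [← sum_mul, hd1, one_mul]

variable [DecidableEq S] [DecidableEq A]

lemma DnormSq_bellman_sub_sgd_step (P : S → A → S → ℝ) (r : S → A → ℝ) (γ : ℝ) (d : S × A → ℝ)
    (Q Qk : S × A → ℝ) (β : ℝ) (s : S) (a : A) (s' : S) :
    DnormSq d (fun x => bellman P r γ Qk x - (Q x - β * sgrad r γ Q Qk (s, a, s') x)) =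
      DnormSq d (fun x => bellman P r γ Qk x - Q x) +
        d (s, a) * (((1 - β) * (bellman P r γ Qk (s, a) - Q (s, a)) +
          -(β * γ) * (greedyValue Qk s' - ∑ t, P s a t * greedyValue Qk t)) ^ 2 -
            (bellman P r γ Qk (s, a) - Q (s, a)) ^ 2) := by
  have sgrad_self : sgrad r γ Q Qk (s, a, s') (s, a) = Q (s, a) - r s a - γ * greedyValue Qk s' :=
    if_pos rfl
  have sgrad_of_ne (x : S × A) (hx : x ≠ (s, a)) : sgrad r γ Q Qk (s, a, s') x = 0 := if_neg hx
  rw [DnormSq_eq_add_of_eqOn_compl d (g := fun x => bellman P r γ Qk x - Q x) (x₀ := (s, a))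
    fun x hx => by rw [sgrad_of_ne x hx, mul_zero, sub_zero]]
  simp only [sgrad_self, bellman_apply]
  ring

lemma sum_transition_mul_DnormSq_bellman_sub_sgd_step (hP1 : ∀ s a, ∑ s', P s a s' = 1)
    (r : S → A → ℝ) (γ : ℝ) (d Q Qk : S × A → ℝ) (β : ℝ) (s : S) (a : A) :
    ∑ s', P s a s' *
        DnormSq d (fun x => bellman P r γ Qk x - (Q x - β * sgrad r γ Q Qk (s, a, s') x)) =
      DnormSq d (fun x => bellman P r γ Qk x - Q x) +
        d (s, a) * (β ^ 2 * γ ^ 2 * weightedVariance (P s a) (greedyValue Qk) -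
          β * (2 - β) * (bellman P r γ Qk (s, a) - Q (s, a)) ^ 2) := by
  simp only [DnormSq_bellman_sub_sgd_step]
  set E := DnormSq d (fun x => bellman P r γ Qk x - Q x)
  set e := bellman P r γ Qk (s, a) - Q (s, a)
  set Z : S → ℝ := fun s' => (1 - β) * e +
    -(β * γ) * (greedyValue Qk s' - ∑ t, P s a t * greedyValue Qk t)
  have bias_variance : ∑ s', P s a s' * Z s' ^ 2 =
      ((1 - β) * e) ^ 2 + (-(β * γ)) ^ 2 * weightedVariance (P s a) (greedyValue Qk) :=
    sum_mul_add_mul_sub_mean_sq (hP1 s a) _ _ _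
  calc ∑ s', P s a s' * (E + d (s, a) * (Z s' ^ 2 - e ^ 2))
      = ∑ s', (P s a s' * (E - d (s, a) * e ^ 2) + d (s, a) * (P s a s' * Z s' ^ 2)) :=
        sum_congr rfl fun s' _ => by ring
    _ = E - d (s, a) * e ^ 2 + d (s, a) * ∑ s', P s a s' * Z s' ^ 2 := by
        rw [sum_add_distrib, ← sum_mul, ← mul_sum, hP1, one_mul]
    _ = E + d (s, a) * (β ^ 2 * γ ^ 2 * weightedVariance (P s a) (greedyValue Qk) -
          β * (2 - β) * e ^ 2) := by rw [bias_variance]; ring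

lemma sum_mul_DnormSq_bellman_sub_sgd_step (hP1 : ∀ s a, ∑ s', P s a s' = 1) (r : S → A → ℝ)
    (γ : ℝ) (hd1 : ∑ x, d x = 1) (Q Qk : S × A → ℝ) (β : ℝ) :
    ∑ smp : S × A × S, d (smp.1, smp.2.1) * P smp.1 smp.2.1 smp.2.2 *
        DnormSq d (fun x => bellman P r γ Qk x - (Q x - β * sgrad r γ Q Qk smp x)) =
      DnormSq d (fun x => bellman P r γ Qk x - Q x)
        - β * (2 - β) * ∑ x, d x ^ 2 * (bellman P r γ Qk x - Q x) ^ 2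
        + β ^ 2 * γ ^ 2 * ∑ x, d x ^ 2 * weightedVariance (P x.1 x.2) (greedyValue Qk) := by
  set E := DnormSq d (fun x => bellman P r γ Qk x - Q x)
  calc _ = ∑ x : S × A, d x * ∑ s', P x.1 x.2 s' * DnormSq d
          (fun y => bellman P r γ Qk y - (Q y - β * sgrad r γ Q Qk (x.1, x.2, s') y)) := by
        simp only [Fintype.sum_prod_type, mul_assoc, mul_sum]
    _ = ∑ x, (d x * E - β * (2 - β) * (d x ^ 2 * (bellman P r γ Qk x - Q x) ^ 2)
          + β ^ 2 * γ ^ 2 * (d x ^ 2 * weightedVariance (P x.1 x.2) (greedyValue Qk))) :=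
        sum_congr rfl fun x _ => by
          rw [sum_transition_mul_DnormSq_bellman_sub_sgd_step hP1]; ring
    _ = _ := by
        rw [sum_add_distrib, sum_sub_distrib, ← sum_mul, ← mul_sum, ← mul_sum, hd1, one_mul]

lemma sum_mul_DnormSq_bellman_sub_sgd_step_le [Nonempty S] (hP0 : ∀ s a s', 0 ≤ P s a s')
    (hP1 : ∀ s a, ∑ s', P s a s' = 1) (r : S → A → ℝ) (γ : ℝ) (hd0 : ∀ x, 0 ≤ d x)
    (hd1 : ∑ x, d x = 1) (hcd : ∀ x, c ≤ d x) (hdL : ∀ x, d x ≤ L) (Q Qk : S × A → ℝ)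
    (hβ0 : 0 ≤ β) (hβ2 : β ≤ 2) :
    ∑ smp : S × A × S, d (smp.1, smp.2.1) * P smp.1 smp.2.1 smp.2.2 *
        DnormSq d (fun x => bellman P r γ Qk x - (Q x - β * sgrad r γ Q Qk smp x)) ≤
      (1 - c * (β * (2 - β))) * DnormSq d (fun x => bellman P r γ Qk x - Q x)
        + γ ^ 2 * L * β ^ 2 * supNorm Qk ^ 2 := by
  have contraction := mul_le_mul_of_nonneg_left
    (mul_DnormSq_le_sum_sq_mul_sq hd0 hcd fun x => bellman P r γ Qk x - Q x)
    (mul_nonneg hβ0 (sub_nonneg.2 hβ2))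
  have noise := mul_le_mul_of_nonneg_left
    (sum_sq_mul_weightedVariance_le hP0 hP1 hd0 hd1 hdL Qk) (by positivity : 0 ≤ β ^ 2 * γ ^ 2)
  rw [sum_mul_DnormSq_bellman_sub_sgd_step hP1 r γ hd1]
  linarith

theorem sgd_one_step_progress_general [Nonempty S] (hP0 : ∀ s a s', 0 ≤ P s a s')
    (hP1 : ∀ s a, ∑ s', P s a s' = 1) {r : S → A → ℝ} (hr : ∀ s a, |r s a| ≤ R)
    (hγ0 : 0 ≤ γ) (hγ1 : γ < 1) {Qstar : S × A → ℝ} (hQstar : bellman P r γ Qstar = Qstar)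
    (hd0 : ∀ x, 0 ≤ d x) (hd1 : ∑ x, d x = 1) (hcd : ∀ x, c ≤ d x) (hdL : ∀ x, d x ≤ L)
    (Q Qk : S × A → ℝ) (hβ0 : 0 ≤ β) (hβ2 : β ≤ 2) :
    ∑ smp : S × A × S, d (smp.1, smp.2.1) * P smp.1 smp.2.1 smp.2.2 *
        DnormSq d (fun x => bellman P r γ Qk x - (Q x - β * sgrad r γ Q Qk smp x)) ≤
      (1 - c * (β * (2 - β))) * DnormSq d (fun x => bellman P r γ Qk x - Q x)
        + 2 * γ ^ 2 * L * β ^ 2 *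
            (supNorm (fun x => Qstar x - Qk x) ^ 2 + (R / (1 - γ)) ^ 2) := by
  have target_bound : supNorm Qk ≤ supNorm (fun x => Qstar x - Qk x) + R / (1 - γ) :=
    (supNorm_le_supNorm_sub_add Qk Qstar).trans <| by
      gcongr
      exact supNorm_le_div_of_bellman_eq_self hP0 hP1 hr hγ0 hγ1 hQstar
  have hL0 : 0 ≤ L := (hd0 (Classical.arbitrary _)).trans (hdL _)
  have noise_bound : γ ^ 2 * L * β ^ 2 * supNorm Qk ^ 2 ≤ γ ^ 2 * L * β ^ 2 *
      (2 * (supNorm (fun x => Qstar x - Qk x) ^ 2 + (R / (1 - γ)) ^ 2)) :=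
    mul_le_mul_of_nonneg_left
      ((pow_le_pow_left₀ (supNorm_nonneg Qk) target_bound 2).trans add_sq_le) (by positivity)
  linarith [sum_mul_DnormSq_bellman_sub_sgd_step_le hP0 hP1 r γ hd0 hd1 hcd hdL Q Qk hβ0 hβ2]

end ExpectedStep

lemma one_step_bound_le_of_stepSize_le_one {c L β γ m n E Δ : ℝ} (hc : 0 ≤ c) (hL : 0 ≤ L)
    (hβ0 : 0 ≤ β) (hβ1 : β ≤ 1) (hγ : γ ^ 2 ≤ 1) (hm : 1 ≤ m) (hn : 1 ≤ n) (hE : 0 ≤ E) :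
    (1 - c * (β * (2 - β))) * E + 2 * γ ^ 2 * L * β ^ 2 * (Δ ^ 2 + (1 / (1 - γ)) ^ 2) ≤
      (1 - c * β) * E + 12 * m * n * γ ^ 2 * L * β ^ 2 * Δ ^ 2
        + 18 * m * n * L * β ^ 2 / (1 - γ) ^ 2 := by
  have hmn : 1 ≤ m * n := one_le_mul_of_one_le_of_one_le hm hn
  have rate : β ≤ β * (2 - β) := le_mul_of_one_le_right hβ0 (by linarith)
  have contraction : (1 - c * (β * (2 - β))) * E ≤ (1 - c * β) * E := by gcongr
  have target_noise : 2 * (γ ^ 2 * L * β ^ 2 * Δ ^ 2) ≤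
      12 * (m * n) * (γ ^ 2 * L * β ^ 2 * Δ ^ 2) :=
    mul_le_mul_of_nonneg_right (by linarith) (by positivity)
  have reward_noise : 2 * γ ^ 2 * (L * β ^ 2 / (1 - γ) ^ 2) ≤
      18 * (m * n) * (L * β ^ 2 / (1 - γ) ^ 2) :=
    mul_le_mul_of_nonneg_right (by linarith) (by positivity)
  calc _ = (1 - c * (β * (2 - β))) * E + 2 * (γ ^ 2 * L * β ^ 2 * Δ ^ 2)
        + 2 * γ ^ 2 * (L * β ^ 2 / (1 - γ) ^ 2) := by rw [div_pow]; ring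
    _ ≤ (1 - c * β) * E + 12 * (m * n) * (γ ^ 2 * L * β ^ 2 * Δ ^ 2)
        + 18 * (m * n) * (L * β ^ 2 / (1 - γ) ^ 2) :=
      add_le_add (add_le_add contraction target_noise) reward_noise
    _ = _ := by ring

theorem sgd_one_step_progress
    {S A : Type*} [Fintype S] [Fintype A] [Nonempty S] [Nonempty A]
    [DecidableEq S] [DecidableEq A]
    (P : S → A → S → ℝ) (hP0 : ∀ s a s', 0 ≤ P s a s') (hP1 : ∀ s a, ∑ s', P s a s' = 1)
    (r : S → A → ℝ) (hr : ∀ s a, |r s a| ≤ 1)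
    (γ : ℝ) (hγ : γ ∈ Set.Ioo (0 : ℝ) 1)
    (Qstar : S × A → ℝ) (hQstar : bellman P r γ Qstar = Qstar)
    (d : S × A → ℝ) (hd0 : ∀ x, 0 < d x) (hd1 : ∑ x, d x = 1)
    (c L : ℝ) (hc : c = Finset.univ.inf' Finset.univ_nonempty d)
    (hL : L = Finset.univ.sup' Finset.univ_nonempty d)
    (Q Qk : S × A → ℝ) (β : ℝ) (hβ0 : 0 < β) (hβ : β ≤ c / (8 * L)) :
    ∑ smp : S × A × S, d (smp.1, smp.2.1) * P smp.1 smp.2.1 smp.2.2 *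
        DnormSq d (fun x => bellman P r γ Qk x - (Q x - β * sgrad r γ Q Qk smp x)) ≤
      (1 - c * β) * DnormSq d (fun x => bellman P r γ Qk x - Q x)
        + 12 * (Fintype.card S : ℝ) * (Fintype.card A : ℝ) * γ ^ 2 * L * β ^ 2 *
            (supNorm (fun x => Qstar x - Qk x)) ^ 2
        + 18 * (Fintype.card S : ℝ) * (Fintype.card A : ℝ) * L * β ^ 2 / (1 - γ) ^ 2 := by
  obtain ⟨hγ0, hγ1⟩ := hγ
  have hcd (x : S × A) : c ≤ d x := hc ▸ inf'_le d (mem_univ x)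
  have hdL (x : S × A) : d x ≤ L := hL ▸ le_sup' d (mem_univ x)
  have hc0 : 0 ≤ c := hc ▸ le_inf' _ _ fun x _ => (hd0 x).le
  have hcL : c ≤ L := (hcd (Classical.arbitrary _)).trans (hdL _)
  have hβ1 : β ≤ 1 := hβ.trans (div_le_one_of_le₀ (by linarith) (by linarith))
  exact (sgd_one_step_progress_general hP0 hP1 hr hγ0.le hγ1 hQstar (fun x => (hd0 x).le) hd1
    hcd hdL Q Qk hβ0.le (hβ1.trans one_le_two)).trans <|
      one_step_bound_le_of_stepSize_le_one hc0 (hc0.trans hcL) hβ0.le hβ1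
        (pow_le_one₀ hγ0.le hγ1.le) (Nat.one_le_cast.2 Fintype.card_pos)
        (Nat.one_le_cast.2 Fintype.card_pos) (DnormSq_nonneg (fun x => (hd0 x).le) _)
end
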